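/- arXiv:math/0603050 — 5 statements merged into one kernel-verified Lean document; each statement's English description precedes it below -/
import Mathlib

section
/- Let D be a triangulated category (pretriangulated, with shift functors ⟦n⟧ for n ∈ ℤ). Let d be an integer and suppose given distinguished triangles X ⟶f Y ⟶g X⟦-d⟧ ⟶ X⟦1⟧ and Y ⟶u X ⟶v T ⟶ Y⟦1⟧ such that u ∘ f = 𝟙_X. Then T ≅ X⟦1 - d⟧. -/
open CategoryTheory Pretriangulated

/-!
The retraction `u` of `f` splits the first triangle. A splitting is symmetric, so `X⟦-d⟧` is also
the first term of a split triangle `X⟦-d⟧ ⟶ Y ⟶ X` whose second morphism is `u`; hence the cone of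
`u` is the shift of `X⟦-d⟧`.
-/

section Preadditive

variable {C : Type*} [Category C] [Preadditive C] {S : ShortComplex C}

/-- The splitting of `S.X₃ ⟶ S.X₂ ⟶ S.X₁` formed by the section and the retraction of a splitting
of `S`: it exchanges the two summands of `S.X₂`. -/
def splittingSwap (σ : S.Splitting) : (ShortComplex.mk σ.s σ.r σ.s_r).Splitting where
  r := S.g
  s := S.f
  id := (add_comm _ _).trans σ.id

end Preadditive

section Pretriangulated

variable {C : Type*} [Category C] [Limits.HasZeroObject C] [HasShift C ℤ]
  [Preadditive C] [∀ n : ℤ, (shiftFunctor C n).Additive] [Pretriangulated C]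

theorem distinguished_of_splitting {S : ShortComplex C} (σ : S.Splitting) :
    Triangle.mk S.f S.g 0 ∈ distTriang C := by
  have inl_comm : S.f ≫ σ.isoBinaryBiproduct.hom = 𝟙 S.X₁ ≫ Limits.biprod.inl := by
    ext <;> simp
  have snd_comm : S.g ≫ 𝟙 S.X₃ = σ.isoBinaryBiproduct.hom ≫ Limits.biprod.snd := by
    simp
  exact isomorphic_distinguished _ (binaryBiproductTriangle_distinguished S.X₁ S.X₃) _
    (Triangle.isoMk _ _ (Iso.refl _) σ.isoBinaryBiproduct (Iso.refl _) inl_comm snd_comm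
      (Limits.zero_comp.trans Limits.comp_zero.symm))

theorem exists_splitting_of_retraction (T : Triangle C) (hT : T ∈ distTriang C)
    {r : T.obj₂ ⟶ T.obj₁} (hr : T.mor₁ ≫ r = 𝟙 T.obj₁) :
    ∃ σ : (shortComplexOfDistTriangle T hT).Splitting, σ.r = r := by
  have : IsSplitMono T.mor₁ := .mk' ⟨r, hr⟩
  have : Epi T.mor₂ := T.epi₂ hT (T.mor₃_eq_zero_of_mono₁ hT inferInstance)
  obtain ⟨s, hs⟩ : ∃ s : T.obj₃ ⟶ T.obj₂, 𝟙 T.obj₂ - r ≫ T.mor₁ = T.mor₂ ≫ s :=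
    T.yoneda_exact₂ hT _ (by simp [reassoc_of% hr])
  have section_mor₂ : s ≫ T.mor₂ = 𝟙 T.obj₃ := by
    simp [← cancel_epi T.mor₂, ← reassoc_of% hs, comp_distTriang_mor_zero₁₂ T hT]
  have total : r ≫ T.mor₁ + T.mor₂ ≫ s = 𝟙 T.obj₂ := by
    rw [← hs, add_sub_cancel]
  exact ⟨{ r := r, s := s, f_r := hr, s_g := section_mor₂, id := total }, rfl⟩

theorem stmt_0_general {X Y Z T : C} {f : X ⟶ Y} {g : Y ⟶ Z} {w₁ : Z ⟶ X⟦(1 : ℤ)⟧}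
    {u : Y ⟶ X} {v : X ⟶ T} {w₂ : T ⟶ Y⟦(1 : ℤ)⟧}
    (hT₁ : Triangle.mk f g w₁ ∈ distTriang C) (hT₂ : Triangle.mk u v w₂ ∈ distTriang C)
    (huf : f ≫ u = 𝟙 X) :
    Nonempty (T ≅ Z⟦(1 : ℤ)⟧) := by
  obtain ⟨σ, rfl⟩ := exists_splitting_of_retraction _ hT₁ huf
  have hσ : Triangle.mk σ.s σ.r 0 ∈ distTriang C := distinguished_of_splitting (splittingSwap σ)
  exact ⟨Triangle.π₃.mapIso <| isoTriangleOfIso₁₂ _ _ hT₂ (rot_of_distTriang _ hσ)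
    (Iso.refl Y) (Iso.refl X) ((Category.comp_id _).trans (Category.id_comp _).symm)⟩

end Pretriangulated

/-- In a pretriangulated category, given distinguished triangles
`X ⟶ Y ⟶ X⟦-d⟧ ⟶ X⟦1⟧` and `Y ⟶ X ⟶ T ⟶ Y⟦1⟧` such that the composite
`X ⟶ Y ⟶ X` is the identity, we have `T ≅ X⟦1 - d⟧`. -/
theorem stmt_0 {D : Type*} [Category D] [Limits.HasZeroObject D] [HasShift D ℤ]
    [Preadditive D] [∀ n : ℤ, (shiftFunctor D n).Additive] [Pretriangulated D]
    (d : ℤ) (X Y T : D) (f : X ⟶ Y) (g : Y ⟶ X⟦(-d : ℤ)⟧) (w₁ : X⟦(-d : ℤ)⟧ ⟶ X⟦(1 : ℤ)⟧)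
    (u : Y ⟶ X) (v : X ⟶ T) (w₂ : T ⟶ Y⟦(1 : ℤ)⟧)
    (hT₁ : Triangle.mk f g w₁ ∈ distTriang D)
    (hT₂ : Triangle.mk u v w₂ ∈ distTriang D)
    (huf : f ≫ u = 𝟙 X) :
    Nonempty (T ≅ X⟦(1 - d : ℤ)⟧) := by
  obtain ⟨e⟩ := stmt_0_general hT₁ hT₂ huf
  exact ⟨e ≪≫ ((shiftFunctorAdd' D (-d) 1 (1 - d) (by ring)).app X).symm⟩
end

section
/- Let A be a ℂ-linear abelian category whose Ext-groups are finite-dimensional ℂ-vector spaces, and let E be an object with dim_ℂ Hom(E, E) = dim_ℂ Ext¹(E, E) = dim_ℂ Ext²(E, E) = 1. Let m ≥ 1 and let E_0 = E, E_1, …, E_m be objects equipped, for each 1 ≤ n ≤ m, with: (i) a short exact sequence σ_n : 0 → E_{n-1} → E_n → E → 0, where σ_1 is non-split; (ii) a morphism of short exact sequences from σ_n to σ_1 whose right vertical map is 𝟙_E (with left vertical map s_n : E_{n-1} → E); (iii) a non-split short exact sequence τ_n : 0 → E → E_n → E_{n-1} → 0 whose class e_n ∈ Ext¹(E_{n-1},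 E) satisfies η_n(e_n) = 0 for n < m and η_m(e_m) ≠ 0, where η_n : Ext¹(E_{n-1}, E) → Ext²(E, E) is the connecting homomorphism of σ_n for the functor Hom(−, E). Then for all 0 ≤ n ≤ m one has dim_ℂ Hom(E_n, E) = 1; moreover dim_ℂ Ext¹(E_n, E) = 1 for all n < m, and Ext¹(E_m, E) = 0. -/
open CategoryTheory CategoryTheory.Abelian

universe w v u

section Helpers

variable {A : Type u} [Category.{v} A] [Abelian A] [Linear ℂ A] [HasExt.{w} A]

/-- The scalar multiplication by `c : ℂ` on Ext-groups of a `ℂ`-linear abelian category,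
given by composition with `c • 𝟙`. -/
noncomputable def extSMul (c : ℂ) {X Y : A} {n : ℕ} (x : Ext X Y n) : Ext X Y n :=
  (Ext.mk₀ (c • 𝟙 X)).comp x (zero_add n)

/-- `Ext X Y n` is a one-dimensional `ℂ`-vector space: there is a nonzero element
spanning it. -/
def ExtIsOneDim (X Y : A) (n : ℕ) : Prop :=
  ∃ e : Ext X Y n, e ≠ 0 ∧ ∀ x : Ext X Y n, ∃ c : ℂ, x = extSMul c e

/-- `Ext X Y n` is a finite-dimensional `ℂ`-vector space: it is spanned by finitely
many elements. -/
def ExtIsFinDim (X Y : A) (n : ℕ) : Prop :=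
  ∃ (k : ℕ) (b : Fin k → Ext X Y n),
    ∀ x : Ext X Y n, ∃ c : Fin k → ℂ, x = ∑ i, extSMul (c i) (b i)

end Helpers

/-!
The connecting homomorphisms of a short exact sequence `0 → X₁ → X₂ → X₃ → 0` for `Hom(-, Y)` are
`δ : Hom(X₁, Y) → Ext¹(X₃, Y)` and `η : Ext¹(X₁, Y) → Ext²(X₃, Y)`. If their sources and the target
of `δ` are simple and `δ ≠ 0`, then Schur's lemma makes `δ` bijective, so that the long exact
sequence breaks up into `Hom(X₂, Y) ≅ Hom(X₃, Y)` and `Ext¹(X₂, Y) ≅ ker η`. Again by Schur's lemma,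
`η` is either zero, and `Ext¹(X₂, Y) ≅ Ext¹(X₁, Y)` is simple again, or injective, and
`Ext¹(X₂, Y) = 0`: the tower goes on exactly as long as the obstructions vanish. For `σ_n`, the map
`δ` is nonzero because it sends `s_n` to the class of `σ_1`.
-/

section Splitting

variable {A : Type u} [Category.{v} A] [Abelian A] [HasExt.{w} A]

lemma extClass_ne_zero_of_not_splitting {S : ShortComplex A} (hS : S.ShortExact)
    (hns : ¬ Nonempty S.Splitting) : hS.extClass ≠ 0 := by
  intro hzero
  obtain ⟨x, hx⟩ := Ext.covariant_sequence_exact₃ S.X₃ hS (Ext.mk₀ (𝟙 S.X₃)) (zero_add 1)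
    (by rw [hzero, Ext.comp_zero])
  obtain ⟨t, rfl⟩ := (Ext.mk₀_bijective _ _).surjective x
  have t_section : t ≫ S.g = 𝟙 S.X₃ :=
    (Ext.mk₀_bijective _ _).injective (by rw [← Ext.mk₀_comp_mk₀, hx])
  exact hns ⟨.ofExactOfSection S hS.exact t t_section hS.mono_f⟩

lemma extClass_comp_mk₀_ne_zero_of_hom {S T : ShortComplex A} (hS : S.ShortExact)
    (hT : T.ShortExact) (φ : S ⟶ T) [IsSplitEpi φ.τ₃] (hns : ¬ Nonempty T.Splitting) :
    hS.extClass.comp (Ext.mk₀ φ.τ₁) (add_zero 1) ≠ 0 := by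
  intro hzero
  apply extClass_ne_zero_of_not_splitting hT hns
  calc hT.extClass
      = (Ext.mk₀ (section_ φ.τ₃)).comp ((Ext.mk₀ φ.τ₃).comp hT.extClass (zero_add 1))
          (zero_add 1) := by
        rw [Ext.mk₀_comp_mk₀_assoc, IsSplitEpi.id, Ext.mk₀_id_comp]
    _ = 0 := by
        rw [← ShortComplex.ShortExact.extClass_naturality hS hT φ, hzero, Ext.comp_zero]

end Splitting

section LongExactSequence

variable (R : Type*) [CommRing R] {A : Type u} [Category.{v} A] [Abelian A] [Linear R A]
  [HasExt.{w} A] {S : ShortComplex A} (hS : S.ShortExact) (Y : A)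

/-- The connecting homomorphism `Ext^a(X₁, Y) → Ext^{a+1}(X₃, Y)` of a short exact sequence
`0 → X₁ → X₂ → X₃ → 0` for the functor `Hom(-, Y)`, given by composition with the class of the
sequence. The target degree is a variable `b` with `1 + a = b`. -/
noncomputable abbrev connectingHom {a b : ℕ} (h : 1 + a = b) :
    Ext S.X₁ Y a →ₗ[R] Ext S.X₃ Y b :=
  hS.extClass.precompOfLinear R Y h

include hS in
lemma exact_precomp_g_precomp_f (n : ℕ) :
    Function.Exact ((Ext.mk₀ S.g).precompOfLinear R Y (zero_add n))
      ((Ext.mk₀ S.f).precompOfLinear R Y (zero_add n)) :=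
  (ShortComplex.ab_exact_iff_function_exact _).1 (Ext.contravariant_sequence_exact₂' hS Y n)

lemma exact_precomp_f_connectingHom {a b : ℕ} (h : 1 + a = b) :
    Function.Exact ((Ext.mk₀ S.f).precompOfLinear R Y (zero_add a)) (connectingHom R hS Y h) :=
  (ShortComplex.ab_exact_iff_function_exact _).1 (Ext.contravariant_sequence_exact₁' hS Y a b h)

lemma exact_connectingHom_precomp_g {a b : ℕ} (h : 1 + a = b) :
    Function.Exact (connectingHom R hS Y h) ((Ext.mk₀ S.g).precompOfLinear R Y (zero_add b)) :=
  (ShortComplex.ab_exact_iff_function_exact _).1 (Ext.contravariant_sequence_exact₃' hS Y a b h)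

variable {R Y}

lemma precomp_g_surjective_of_connectingHom_injective {a b : ℕ} {h : 1 + a = b}
    (hδ : Function.Injective (connectingHom R hS Y h)) :
    Function.Surjective ((Ext.mk₀ S.g).precompOfLinear R Y (zero_add a)) :=
  (LinearMap.surjective_iff_eq_zero_of_exact (exact_precomp_g_precomp_f R hS Y a)).2 <|
    (LinearMap.injective_iff_eq_zero_of_exact (exact_precomp_f_connectingHom R hS Y h)).1 hδ

lemma precomp_f_injective_of_connectingHom_surjective {a b : ℕ} {h : 1 + a = b}
    (hδ : Function.Surjective (connectingHom R hS Y h)) :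
    Function.Injective ((Ext.mk₀ S.f).precompOfLinear R Y (zero_add b)) :=
  (LinearMap.injective_iff_eq_zero_of_exact (exact_precomp_g_precomp_f R hS Y b)).2 <|
    (LinearMap.surjective_iff_eq_zero_of_exact (exact_connectingHom_precomp_g R hS Y h)).1 hδ

lemma precomp_f_surjective_of_connectingHom_eq_zero {a b : ℕ} {h : 1 + a = b}
    (hη : connectingHom R hS Y h = 0) :
    Function.Surjective ((Ext.mk₀ S.f).precompOfLinear R Y (zero_add a)) :=
  (LinearMap.surjective_iff_eq_zero_of_exact (exact_precomp_f_connectingHom R hS Y h)).2 hη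

lemma leftComp_g_bijective_of_connectingHom_injective
    (hδ : Function.Injective (connectingHom R hS Y (add_zero 1))) :
    Function.Bijective (Linear.leftComp R Y S.g) := by
  have := hS.epi_g
  refine ⟨fun _ _ ↦ (cancel_epi S.g).1, fun f ↦ ?_⟩
  obtain ⟨x, hx⟩ := precomp_g_surjective_of_connectingHom_injective hS hδ (Ext.mk₀ f)
  obtain ⟨f', rfl⟩ := (Ext.mk₀_bijective _ _).surjective x
  exact ⟨f', (Ext.mk₀_bijective _ _).injective ((Ext.mk₀_comp_mk₀ _ _).symm.trans hx)⟩

end LongExactSequence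

section SimpleExt

variable {R : Type*} [CommRing R] {A : Type u} [Category.{v} A] [Abelian A] [Linear R A]
  [HasExt.{w} A] {S : ShortComplex A} (hS : S.ShortExact) {Y : A}

lemma isSimpleModule_hom_X₂ [IsSimpleModule R (S.X₁ ⟶ Y)] [IsSimpleModule R (S.X₃ ⟶ Y)]
    (hδ : connectingHom R hS Y (add_zero 1) ≠ 0) : IsSimpleModule R (S.X₂ ⟶ Y) := by
  have : IsSimpleModule R (Ext S.X₁ Y 0) := .congr Ext.linearEquiv₀
  have g_bijective := leftComp_g_bijective_of_connectingHom_injective hS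
    (LinearMap.injective_of_ne_zero hδ)
  exact .congr (LinearEquiv.ofBijective _ g_bijective).symm

variable {a b c : ℕ} {h : 1 + a = b} {h' : 1 + b = c}

lemma isSimpleModule_ext_X₂ [IsSimpleModule R (Ext S.X₁ Y b)] [IsSimpleModule R (Ext S.X₃ Y b)]
    (hδ : connectingHom R hS Y h ≠ 0)
    (hη : ¬ Function.Injective (connectingHom R hS Y h')) :
    IsSimpleModule R (Ext S.X₂ Y b) := by
  have f_injective := precomp_f_injective_of_connectingHom_surjective hS
    (LinearMap.surjective_of_ne_zero hδ)
  have f_surjective := precomp_f_surjective_of_connectingHom_eq_zero hS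
    ((LinearMap.injective_or_eq_zero _).resolve_left hη)
  exact .congr (LinearEquiv.ofBijective _ ⟨f_injective, f_surjective⟩)

lemma subsingleton_ext_X₂ [IsSimpleModule R (Ext S.X₁ Y b)] [IsSimpleModule R (Ext S.X₃ Y b)]
    (hδ : connectingHom R hS Y h ≠ 0) (hη : connectingHom R hS Y h' ≠ 0) :
    Subsingleton (Ext S.X₂ Y b) := by
  have f_injective := precomp_f_injective_of_connectingHom_surjective hS
    (LinearMap.surjective_of_ne_zero hδ)
  have η_comp_f_injective := (LinearMap.injective_of_ne_zero hη).comp f_injective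
  have η_comp_f_eq_zero := (exact_precomp_f_connectingHom R hS Y h').apply_apply_eq_zero
  exact ⟨fun x y ↦ η_comp_f_injective ((η_comp_f_eq_zero x).trans (η_comp_f_eq_zero y).symm)⟩

end SimpleExt

/-- Non-injectivity of `η_n` stands for a nonzero class `e_n` with `η_n (e_n) = 0`, and `η_m ≠ 0`
for a class `e_m` with `η_m (e_m) ≠ 0`; `δ ≠ 0` stands for the morphisms `σ_n → σ_1`. -/
theorem stmt_3_general {R : Type*} [CommRing R] {A : Type u} [Category.{v} A] [Abelian A]
    [Linear R A] [HasExt.{w} A] {m : ℕ} (hm : 0 < m) {F : ℕ → A} {X Y : A}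
    (hHom₀ : IsSimpleModule R (F 0 ⟶ Y)) (hExt₀ : IsSimpleModule R (Ext (F 0) Y 1))
    (hHom : IsSimpleModule R (X ⟶ Y)) (hExt : IsSimpleModule R (Ext X Y 1))
    {ι : ∀ j : Fin m, F j ⟶ F ((j : ℕ) + 1)} {π : ∀ j : Fin m, F ((j : ℕ) + 1) ⟶ X}
    {hc : ∀ j : Fin m, ι j ≫ π j = 0}
    (hσ : ∀ j : Fin m, (ShortComplex.mk (ι j) (π j) (hc j)).ShortExact)
    (hδ : ∀ j : Fin m, connectingHom R (hσ j) Y (add_zero 1) ≠ 0)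
    (hobs : ∀ j : Fin m, (j : ℕ) + 1 < m →
      ¬ Function.Injective (connectingHom R (hσ j) Y one_add_one_eq_two))
    (hobsm : ∀ j : Fin m, (j : ℕ) + 1 = m →
      connectingHom R (hσ j) Y one_add_one_eq_two ≠ 0) :
    (∀ n ≤ m, IsSimpleModule R (F n ⟶ Y)) ∧
    (∀ n < m, IsSimpleModule R (Ext (F n) Y 1)) ∧
    Subsingleton (Ext (F m) Y 1) := by
  have hom_simple (n : ℕ) (hn : n ≤ m) : IsSimpleModule R (F n ⟶ Y) := by
    induction n with
    | zero => exact hHom₀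
    | succ n ih =>
      have := ih (by lia)
      exact isSimpleModule_hom_X₂ (hσ ⟨n, hn⟩) (hδ ⟨n, hn⟩)
  have ext_simple (n : ℕ) (hn : n < m) : IsSimpleModule R (Ext (F n) Y 1) := by
    induction n with
    | zero => exact hExt₀
    | succ n ih =>
      have := ih (by lia)
      exact isSimpleModule_ext_X₂ (hσ ⟨n, by lia⟩) (hδ ⟨n, by lia⟩) (hobs ⟨n, by lia⟩ hn)
  refine ⟨hom_simple, ext_simple, ?_⟩
  obtain ⟨k, rfl⟩ := Nat.exists_eq_add_one.2 hm
  have := ext_simple k (by lia)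
  exact subsingleton_ext_X₂ (hσ ⟨k, by lia⟩) (hδ ⟨k, by lia⟩) (hobsm ⟨k, by lia⟩ rfl)

lemma extSMul_eq_smul {A : Type u} [Category.{v} A] [Abelian A] [Linear ℂ A] [HasExt.{w} A]
    (c : ℂ) {X Y : A} {n : ℕ} (x : Ext X Y n) : extSMul c x = c • x := by
  rw [extSMul, Ext.mk₀_smul, Ext.smul_comp, Ext.mk₀_id_comp]

lemma extIsOneDim_iff_isSimpleModule {A : Type u} [Category.{v} A] [Abelian A] [Linear ℂ A]
    [HasExt.{w} A] {X Y : A} {n : ℕ} :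
    ExtIsOneDim X Y n ↔ IsSimpleModule ℂ (Ext X Y n) := by
  rw [isSimpleModule_iff_finrank_eq_one, finrank_eq_one_iff']
  simp only [ExtIsOneDim, extSMul_eq_smul, eq_comm]

/-- Let `A` be a `ℂ`-linear abelian category with finite-dimensional
Ext-groups and `E = F 0` an object with `dim Hom(E,E) = dim Ext¹(E,E) = dim Ext²(E,E) = 1`.
Given objects `E_n = F n` (`0 ≤ n ≤ m`, `m ≥ 1`) together with, for each `1 ≤ n ≤ m`
(indexed here by `j = n - 1 : Fin m`):
(i) short exact sequences `σ_n : 0 → E_{n-1} → E_n → E → 0` with `σ_1` non-split;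
(ii) morphisms of short exact sequences `σ_n → σ_1` with identity right vertical map;
(iii) non-split short exact sequences `τ_n : 0 → E → E_n → E_{n-1} → 0` whose classes
`e_n ∈ Ext¹(E_{n-1},E)` satisfy `η_n (e_n) = 0` for `n < m` and `η_m (e_m) ≠ 0`, where
`η_n : Ext¹(E_{n-1},E) → Ext²(E,E)` is the connecting homomorphism of `σ_n` for `Hom(-,E)`.
Then `dim Hom(E_n,E) = 1` for all `n ≤ m`, `dim Ext¹(E_n,E) = 1` for `n < m`, and
`Ext¹(E_m,E) = 0`. -/
theorem stmt_3 {A : Type u} [Category.{v} A] [Abelian A] [Linear ℂ A] [HasExt.{w} A]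
    (hfd : ∀ (X Y : A) (n : ℕ), ExtIsFinDim X Y n)
    (m : ℕ) (hm : 0 < m) (F : ℕ → A)
    (hHom : Module.finrank ℂ (F 0 ⟶ F 0) = 1)
    (hExt1 : ExtIsOneDim (F 0) (F 0) 1)
    (hExt2 : ExtIsOneDim (F 0) (F 0) 2)
    -- (i) the short exact sequences σ_{j+1} : 0 → F j → F (j+1) → F 0 → 0
    (ι : ∀ j : Fin m, F j ⟶ F ((j : ℕ) + 1))
    (π : ∀ j : Fin m, F ((j : ℕ) + 1) ⟶ F 0)
    (hc : ∀ j : Fin m, ι j ≫ π j = 0)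
    (hσ : ∀ j : Fin m, (ShortComplex.mk (ι j) (π j) (hc j)).ShortExact)
    -- σ_1 is non-split
    (hσ₁ : ¬ Nonempty (ShortComplex.mk (ι ⟨0, hm⟩) (π ⟨0, hm⟩) (hc ⟨0, hm⟩)).Splitting)
    -- (ii) morphisms of short exact sequences from σ_{j+1} to σ_1 with right vertical 𝟙
    (s : ∀ j : Fin m, F j ⟶ F 0)
    (r : ∀ j : Fin m, F ((j : ℕ) + 1) ⟶ F 1)
    (hsq₁ : ∀ j : Fin m, ι j ≫ r j = s j ≫ ι ⟨0, hm⟩)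
    (hsq₂ : ∀ j : Fin m, r j ≫ π ⟨0, hm⟩ = π j)
    -- (iii) the non-split short exact sequences τ_{j+1} : 0 → F 0 → F (j+1) → F j → 0
    (ι' : ∀ j : Fin m, F 0 ⟶ F ((j : ℕ) + 1))
    (π' : ∀ j : Fin m, F ((j : ℕ) + 1) ⟶ F j)
    (hc' : ∀ j : Fin m, ι' j ≫ π' j = 0)
    (hτ : ∀ j : Fin m, (ShortComplex.mk (ι' j) (π' j) (hc' j)).ShortExact)
    (hτns : ∀ j : Fin m, ¬ Nonempty (ShortComplex.mk (ι' j) (π' j) (hc' j)).Splitting)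
    -- the obstructions η_{j+1}(e_{j+1}) vanish for j + 1 < m and are nonzero for j + 1 = m
    (hobs : ∀ j : Fin m, (j : ℕ) + 1 < m →
      (hσ j).extClass.comp (hτ j).extClass (by norm_num) = (0 : Ext (F 0) (F 0) 2))
    (hobsm : ∀ j : Fin m, (j : ℕ) + 1 = m →
      (hσ j).extClass.comp (hτ j).extClass (by norm_num) ≠ (0 : Ext (F 0) (F 0) 2)) :
    (∀ n ≤ m, Module.finrank ℂ (F n ⟶ F 0) = 1) ∧
    (∀ n < m, ExtIsOneDim (F n) (F 0) 1) ∧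
    (∀ x : Ext (F m) (F 0) 1, x = 0) := by
  simp only [← isSimpleModule_iff_finrank_eq_one, extIsOneDim_iff_isSimpleModule,
    ← subsingleton_iff_forall_eq] at hHom hExt1 ⊢
  refine stmt_3_general hm hHom hExt1 hHom hExt1 hσ (fun j hδ ↦ ?_) (fun j hj hη ↦ ?_)
    (fun j hj hη ↦ hobsm j hj congr($hη (hτ j).extClass))
  · let φ : ShortComplex.mk (ι j) (π j) (hc j) ⟶ ShortComplex.mk _ _ (hc ⟨0, hm⟩) :=
      ⟨s j, r j, 𝟙 (F 0), (hsq₁ j).symm, (hsq₂ j).trans (Category.comp_id _).symm⟩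
    have : IsSplitEpi φ.τ₃ := inferInstanceAs (IsSplitEpi (𝟙 (F 0)))
    exact extClass_comp_mk₀_ne_zero_of_hom (hσ j) (hσ ⟨0, hm⟩) φ hσ₁ congr($hδ (Ext.mk₀ (s j)))
  · exact extClass_ne_zero_of_not_splitting (hτ j) (hτns j) <|
      (injective_iff_map_eq_zero _).1 hη _ (hobs j hj)
end

section
/- Let A be a ℂ-linear abelian category whose Ext-groups are finite-dimensional ℂ-vector spaces, and let E be an object with dim_ℂ Hom(E, E) = dim_ℂ Ext¹(E, E) = dim_ℂ Ext²(E, E) = 1. Let m ≥ 1 and let E_0 = E, E_1, …, E_m be objects equipped, for each 1 ≤ n ≤ m, with: (i) a short exact sequence τ_n : 0 → E → E_n → E_{n-1} → 0, where τ_1 is non-split; (ii) a morphism of short exact sequences from τ_1 to τ_n whose left vertical map is 𝟙_E; (iii) a non-split short exact sequence σ_n : 0 → E_{n-1} → E_n → E → 0 whose class e'_n ∈ Ext¹(E, E_{n-1}) satisfies η'_n(e'_n) = 0 for n < m and η'_m(e'_m) ≠ 0, where η'_n : Ext¹(E, E_{n-1}) → Ext²(E, E) is the connecting homomorphism of τ_n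 for the functor Hom(E, −). Then dim_ℂ Hom(E, E_m) = 1 and Ext¹(E, E_m) = 0. -/
open CategoryTheory CategoryTheory.Abelian

universe w v u

/-!
Apply `Hom(E, -)` to `τ_n : 0 → E → E_n → E_{n-1} → 0`. The identity of `E` on the left of the
morphism `τ_1 → τ_n` makes `τ_1` a pullback of `τ_n`, so the class of `τ_1`, which is nonzero, lies
in the image of the connecting map `δ_n : Hom(E, E_{n-1}) → Ext¹(E, E)`. A nonzero map between lines
is bijective. Injectivity of `δ_n` gives `Hom(E, E) ≅ Hom(E, E_n)`, so that all `Hom(E, E_n)` are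
lines; surjectivity of `δ_n` identifies `Ext¹(E, E_n)` with the kernel of
`η'_n : Ext¹(E, E_{n-1}) → Ext²(E, E)`, so that all `Ext¹(E, E_n)` have dimension at most one.
At the last stage `η'_m` is nonzero on a space of dimension at most one, hence injective.
-/

theorem injective_of_ne_zero_of_rank_le_one {K V W : Type*} [DivisionRing K] [AddCommGroup V]
    [Module K V] [AddCommGroup W] [Module K W] (hV : Module.rank K V ≤ 1) {f : V →ₗ[K] W}
    (hf : f ≠ 0) : Function.Injective f := by
  obtain ⟨v, hv⟩ := DFunLike.ne_iff.1 hf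
  have : Nontrivial V := ⟨v, 0, by rintro rfl; simp at hv⟩
  have hV_one : Module.rank K V = 1 := hV.antisymm (Cardinal.one_le_iff_pos.2 rank_pos)
  have : IsSimpleModule K V :=
    isSimpleModule_iff_finrank_eq_one.2 (Module.rank_eq_one_iff_finrank_eq_one.1 hV_one)
  exact LinearMap.injective_of_ne_zero hf

section Splitting

variable {A : Type u} [Category.{v} A] [Abelian A] [HasExt.{w} A]

theorem extClass_eq_zero_iff_nonempty_splitting {S : ShortComplex A} (hS : S.ShortExact) :
    hS.extClass = 0 ↔ Nonempty S.Splitting := by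
  constructor
  · intro h
    obtain ⟨x, hx⟩ := Ext.covariant_sequence_exact₃ S.X₃ hS (Ext.mk₀ (𝟙 S.X₃)) (zero_add 1)
      (by rw [h, Ext.comp_zero])
    obtain ⟨s, rfl⟩ := (Ext.mk₀_bijective _ _).2 x
    rw [Ext.mk₀_comp_mk₀] at hx
    exact ⟨.ofExactOfSection S hS.exact s ((Ext.mk₀_bijective _ _).1 hx) hS.mono_f⟩
  · rintro ⟨σ⟩
    rw [← Ext.mk₀_id_comp hS.extClass, ← σ.s_g, ← Ext.mk₀_comp_mk₀,
      Ext.comp_assoc_of_second_deg_zero, hS.comp_extClass, Ext.comp_zero]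

end Splitting

section ConnectingHom

variable (R : Type*) [CommRing R] {A : Type u} [Category.{v} A] [Abelian A] [Linear R A]
  [HasExt.{w} A] {S : ShortComplex A} (hS : S.ShortExact) (X : A) {n₀ n₁ : ℕ} (hn : n₀ + 1 = n₁)

/-- The connecting homomorphism `Ext^{n₀}(X, S.X₃) → Ext^{n₁}(X, S.X₁)`, `n₁ = n₀ + 1`, of a short
exact sequence `S` for the functor `Hom(X, -)`, realised as the Yoneda product with the class
of `S`. -/
noncomputable def extConnectingHom : Ext X S.X₃ n₀ →ₗ[R] Ext X S.X₁ n₁ :=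
  hS.extClass.postcompOfLinear R X hn

@[simp]
theorem extConnectingHom_apply (x : Ext X S.X₃ n₀) :
    extConnectingHom R hS X hn x = x.comp hS.extClass hn := rfl

theorem extConnectingHom_postcomp_mk₀_g (x : Ext X S.X₂ n₀) :
    extConnectingHom R hS X hn (x.comp (Ext.mk₀ S.g) (add_zero n₀)) = 0 := by
  rw [extConnectingHom_apply, Ext.comp_assoc_of_second_deg_zero, hS.comp_extClass, Ext.comp_zero]

theorem postcomp_mk₀_f_extConnectingHom (x : Ext X S.X₃ n₀) :
    (extConnectingHom R hS X hn x).comp (Ext.mk₀ S.f) (add_zero n₁) = 0 := by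
  rw [extConnectingHom_apply, Ext.comp_assoc_of_third_deg_zero, hS.extClass_comp, Ext.comp_zero]

variable {R X hn}

theorem postcomp_mk₀_f_surjective
    (hδ : Function.Injective (extConnectingHom R hS X hn)) :
    Function.Surjective ((Ext.mk₀ S.f).postcompOfLinear R X (add_zero n₀)) := fun x ↦
  Ext.covariant_sequence_exact₂ X hS x <|
    (map_eq_zero_iff _ hδ).1 (extConnectingHom_postcomp_mk₀_g R hS X hn x)

theorem postcomp_mk₀_g_injective
    (hδ : Function.Surjective (extConnectingHom R hS X hn)) :
    Function.Injective ((Ext.mk₀ S.g).postcompOfLinear R X (add_zero n₁)) := by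
  rw [injective_iff_map_eq_zero]
  intro x hx
  obtain ⟨y, rfl⟩ := Ext.covariant_sequence_exact₂ X hS x hx
  obtain ⟨z, rfl⟩ := hδ y
  exact postcomp_mk₀_f_extConnectingHom R hS X hn z

theorem subsingleton_ext_X₂_s4 {n₂ : ℕ} {hn' : n₁ + 1 = n₂}
    (hδ : Function.Surjective (extConnectingHom R hS X hn))
    (hη : Function.Injective (extConnectingHom R hS X hn')) :
    Subsingleton (Ext X S.X₂ n₁) :=
  subsingleton_of_forall_eq 0 fun x ↦
    (map_eq_zero_iff _ (postcomp_mk₀_g_injective hS hδ)).1 <|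
      (map_eq_zero_iff _ hη).1 (extConnectingHom_postcomp_mk₀_g R hS X hn' x)

theorem finrank_hom_X₂_eq_finrank_hom_X₁
    (hδ : Function.Injective (extConnectingHom R hS X (zero_add 1))) :
    Module.finrank R (X ⟶ S.X₂) = Module.finrank R (X ⟶ S.X₁) := by
  have := hS.mono_f
  have hf : Function.Bijective ((Ext.mk₀ S.f).postcompOfLinear R X (add_zero 0)) :=
    ⟨Ext.postcomp_mk₀_injective_of_mono X S.f, postcomp_mk₀_f_surjective hS hδ⟩
  exact (Ext.linearEquiv₀.symm ≪≫ₗ .ofBijective _ hf ≪≫ₗ Ext.linearEquiv₀).finrank_eq.symm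

theorem extConnectingHom_ne_zero_of_not_splitting {S₁ S₂ : ShortComplex A} (h₁ : S₁.ShortExact)
    (h₂ : S₂.ShortExact) (φ : S₁ ⟶ S₂) [IsSplitMono φ.τ₁] (hS₁ : ¬ Nonempty S₁.Splitting) :
    extConnectingHom R h₂ S₁.X₃ (zero_add 1) ≠ 0 := by
  intro h
  have hφ : h₁.extClass.comp (Ext.mk₀ φ.τ₁) (add_zero 1) = 0 :=
    (h₁.extClass_naturality h₂ φ).trans (LinearMap.congr_fun h (Ext.mk₀ φ.τ₃))
  refine hS₁ ((extClass_eq_zero_iff_nonempty_splitting h₁).1 ?_)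
  rw [← Ext.comp_mk₀_id h₁.extClass, ← IsSplitMono.id φ.τ₁, ← Ext.mk₀_comp_mk₀,
    ← Ext.comp_assoc_of_third_deg_zero, hφ, Ext.zero_comp]

end ConnectingHom

section Tower

variable {k : Type*} [Field k] {A : Type u} [Category.{v} A] [Abelian A] [Linear k A]
  [HasExt.{w} A]

theorem extConnectingHom_injective_of_finrank_hom_eq_one {S : ShortComplex A} (hS : S.ShortExact)
    {X : A} (hX : Module.finrank k (X ⟶ S.X₃) = 1)
    (hδ : extConnectingHom k hS X (zero_add 1) ≠ 0) :
    Function.Injective (extConnectingHom k hS X (zero_add 1)) := by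
  have : IsSimpleModule k (Ext X S.X₃ 0) :=
    isSimpleModule_iff_finrank_eq_one.2 (Ext.linearEquiv₀.finrank_eq.trans hX)
  exact LinearMap.injective_of_ne_zero hδ

theorem extConnectingHom_surjective_of_finrank_ext_eq_one {S : ShortComplex A} (hS : S.ShortExact)
    {X : A} {n₀ n₁ : ℕ} {hn : n₀ + 1 = n₁} (hX : Module.finrank k (Ext X S.X₁ n₁) = 1)
    (hδ : extConnectingHom k hS X hn ≠ 0) :
    Function.Surjective (extConnectingHom k hS X hn) := by
  have : IsSimpleModule k (Ext X S.X₁ n₁) := isSimpleModule_iff_finrank_eq_one.2 hX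
  exact LinearMap.surjective_of_ne_zero hδ

variable {m : ℕ} {F : ℕ → A} {E : A} {i : ∀ j : Fin m, E ⟶ F (j + 1)}
  {p : ∀ j : Fin m, F (j + 1) ⟶ F j} {hip : ∀ j, i j ≫ p j = 0}
  {hτ : ∀ j, (ShortComplex.mk (i j) (p j) (hip j)).ShortExact} {X : A}

theorem finrank_hom_tower_eq_one (hE : Module.finrank k (X ⟶ E) = 1)
    (hF : Module.finrank k (X ⟶ F 0) = 1)
    (hδ : ∀ j, extConnectingHom k (hτ j) X (zero_add 1) ≠ 0) {n : ℕ} (hn : n ≤ m) :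
    Module.finrank k (X ⟶ F n) = 1 := by
  induction n with
  | zero => exact hF
  | succ n ih =>
    have hδ_inj := extConnectingHom_injective_of_finrank_hom_eq_one (hτ ⟨n, hn⟩)
      (ih (Nat.le_of_succ_le hn)) (hδ ⟨n, hn⟩)
    exact (finrank_hom_X₂_eq_finrank_hom_X₁ (hτ ⟨n, hn⟩) hδ_inj).trans hE

theorem rank_ext_tower_le_one {a b : ℕ} {hab : a + 1 = b}
    (hE : Module.finrank k (Ext X E b) = 1) (hF : Module.rank k (Ext X (F 0) b) ≤ 1)
    (hδ : ∀ j, extConnectingHom k (hτ j) X hab ≠ 0) {n : ℕ} (hn : n ≤ m) :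
    Module.rank k (Ext X (F n) b) ≤ 1 := by
  induction n with
  | zero => exact hF
  | succ n ih =>
    have hδ_surj :=
      extConnectingHom_surjective_of_finrank_ext_eq_one (hτ ⟨n, hn⟩) hE (hδ ⟨n, hn⟩)
    have hp_inj := postcomp_mk₀_g_injective (hτ ⟨n, hn⟩) hδ_surj
    exact (LinearMap.rank_le_of_injective _ hp_inj).trans (ih (Nat.le_of_succ_le hn))

end Tower

theorem stmt_4_general {k : Type*} [Field k] {A : Type u} [Category.{v} A] [Abelian A] [Linear k A]
    [HasExt.{w} A] {m : ℕ} {F : ℕ → A}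
    (hHom : Module.finrank k (F 0 ⟶ F 0) = 1)
    (hExt1 : Module.finrank k (Ext (F 0) (F 0) 1) = 1)
    {i : ∀ j : Fin (m + 1), F 0 ⟶ F (j + 1)} {p : ∀ j : Fin (m + 1), F (j + 1) ⟶ F j}
    {hip : ∀ j, i j ≫ p j = 0} (hτ : ∀ j, (ShortComplex.mk (i j) (p j) (hip j)).ShortExact)
    (hδ : ∀ j, extConnectingHom k (hτ j) (F 0) (zero_add 1) ≠ 0)
    (hη : extConnectingHom k (hτ (Fin.last m)) (F 0) one_add_one_eq_two ≠ 0) :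
    Module.finrank k (F 0 ⟶ F (m + 1)) = 1 ∧ Subsingleton (Ext (F 0) (F (m + 1)) 1) := by
  have hExt1_le : Module.rank k (Ext (F 0) (F m) 1) ≤ 1 :=
    rank_ext_tower_le_one hExt1 (Module.rank_eq_one_iff_finrank_eq_one.2 hExt1).le hδ m.le_succ
  have hδ_surj :=
    extConnectingHom_surjective_of_finrank_ext_eq_one (hτ (Fin.last m)) hExt1 (hδ (Fin.last m))
  have hη_inj := injective_of_ne_zero_of_rank_le_one hExt1_le hη
  exact ⟨finrank_hom_tower_eq_one hHom hHom hδ le_rfl,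
    subsingleton_ext_X₂_s4 (hτ (Fin.last m)) hδ_surj hη_inj⟩

section OneDim

variable {A : Type u} [Category.{v} A] [Abelian A] [Linear ℂ A] [HasExt.{w} A] {X Y : A} {n : ℕ}

theorem extSMul_eq_smul_s4 (c : ℂ) (x : Ext X Y n) : extSMul c x = c • x := by
  rw [extSMul, Ext.mk₀_smul, Ext.smul_comp, Ext.mk₀_id_comp]

theorem extIsOneDim_iff_finrank_eq_one : ExtIsOneDim X Y n ↔ Module.finrank ℂ (Ext X Y n) = 1 := by
  simp only [ExtIsOneDim, extSMul_eq_smul_s4, finrank_eq_one_iff', eq_comm (b := _ • _)]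

end OneDim

/-- Let `A` be a `ℂ`-linear abelian category with finite-dimensional
Ext-groups and `E = F 0` an object with `dim Hom(E,E) = dim Ext¹(E,E) = dim Ext²(E,E) = 1`.
Given objects `E_n = F n` (`0 ≤ n ≤ m`, `m ≥ 1`) together with, for each `1 ≤ n ≤ m`
(indexed here by `j = n - 1 : Fin m`):
(i) short exact sequences `τ_n : 0 → E → E_n → E_{n-1} → 0` with `τ_1` non-split;
(ii) morphisms of short exact sequences `τ_1 → τ_n` with identity left vertical map;
(iii) non-split short exact sequences `σ_n : 0 → E_{n-1} → E_n → E → 0` whose classes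
`e'_n ∈ Ext¹(E,E_{n-1})` satisfy `η'_n (e'_n) = 0` for `n < m` and `η'_m (e'_m) ≠ 0`, where
`η'_n : Ext¹(E,E_{n-1}) → Ext²(E,E)` is the connecting homomorphism of `τ_n` for `Hom(E,-)`.
Then `dim Hom(E,E_m) = 1` and `Ext¹(E,E_m) = 0`. -/
theorem stmt_4 {A : Type u} [Category.{v} A] [Abelian A] [Linear ℂ A] [HasExt.{w} A]
    (hfd : ∀ (X Y : A) (n : ℕ), ExtIsFinDim X Y n)
    (m : ℕ) (hm : 0 < m) (F : ℕ → A)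
    (hHom : Module.finrank ℂ (F 0 ⟶ F 0) = 1)
    (hExt1 : ExtIsOneDim (F 0) (F 0) 1)
    (hExt2 : ExtIsOneDim (F 0) (F 0) 2)
    -- (i) the short exact sequences τ_{j+1} : 0 → F 0 → F (j+1) → F j → 0
    (ι' : ∀ j : Fin m, F 0 ⟶ F ((j : ℕ) + 1))
    (π' : ∀ j : Fin m, F ((j : ℕ) + 1) ⟶ F j)
    (hc' : ∀ j : Fin m, ι' j ≫ π' j = 0)
    (hτ : ∀ j : Fin m, (ShortComplex.mk (ι' j) (π' j) (hc' j)).ShortExact)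
    -- τ_1 is non-split
    (hτ₁ : ¬ Nonempty (ShortComplex.mk (ι' ⟨0, hm⟩) (π' ⟨0, hm⟩) (hc' ⟨0, hm⟩)).Splitting)
    -- (ii) morphisms of short exact sequences from τ_1 to τ_{j+1} with left vertical 𝟙
    (r : ∀ j : Fin m, F 1 ⟶ F ((j : ℕ) + 1))
    (t : ∀ j : Fin m, F 0 ⟶ F j)
    (hsq₁ : ∀ j : Fin m, ι' ⟨0, hm⟩ ≫ r j = ι' j)
    (hsq₂ : ∀ j : Fin m, r j ≫ π' j = π' ⟨0, hm⟩ ≫ t j)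
    -- (iii) the non-split short exact sequences σ_{j+1} : 0 → F j → F (j+1) → F 0 → 0
    (ι : ∀ j : Fin m, F j ⟶ F ((j : ℕ) + 1))
    (π : ∀ j : Fin m, F ((j : ℕ) + 1) ⟶ F 0)
    (hc : ∀ j : Fin m, ι j ≫ π j = 0)
    (hσ : ∀ j : Fin m, (ShortComplex.mk (ι j) (π j) (hc j)).ShortExact)
    (hσns : ∀ j : Fin m, ¬ Nonempty (ShortComplex.mk (ι j) (π j) (hc j)).Splitting)
    -- the obstructions η'_{j+1}(e'_{j+1}) vanish for j + 1 < m and are nonzero for j + 1 = m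
    (hobs : ∀ j : Fin m, (j : ℕ) + 1 < m →
      (hσ j).extClass.comp (hτ j).extClass (by norm_num) = (0 : Ext (F 0) (F 0) 2))
    (hobsm : ∀ j : Fin m, (j : ℕ) + 1 = m →
      (hσ j).extClass.comp (hτ j).extClass (by norm_num) ≠ (0 : Ext (F 0) (F 0) 2)) :
    Module.finrank ℂ (F 0 ⟶ F m) = 1 ∧
    (∀ x : Ext (F 0) (F m) 1, x = 0) := by
  obtain ⟨m, rfl⟩ := Nat.exists_eq_add_one.2 hm
  have hδ (j : Fin (m + 1)) : extConnectingHom ℂ (hτ j) (F 0) (zero_add 1) ≠ 0 :=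
    extConnectingHom_ne_zero_of_not_splitting (hτ ⟨0, hm⟩) (hτ j)
      { τ₁ := 𝟙 (F 0), τ₂ := r j, τ₃ := t j,
        comm₁₂ := (Category.id_comp _).trans (hsq₁ j).symm, comm₂₃ := hsq₂ j } hτ₁
  have hη : extConnectingHom ℂ (hτ (Fin.last m)) (F 0) one_add_one_eq_two ≠ 0 := fun h ↦
    hobsm (Fin.last m) rfl (LinearMap.congr_fun h (hσ (Fin.last m)).extClass)
  obtain ⟨hHom_top, hExt_top⟩ :=
    stmt_4_general hHom (extIsOneDim_iff_finrank_eq_one.1 hExt1) hτ hδ hη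
  exact ⟨hHom_top, fun x ↦ Subsingleton.elim x 0⟩
end

section
/- Let D be a ℂ-linear pretriangulated category with shift functors ⟦n⟧, let n ≥ 1, let E be an object and h : E → E⟦2⟧ a morphism. For j ≥ 0 write h^j : E → E⟦2j⟧ for the j-fold composite h⟦2(j−1)⟧ ∘ ⋯ ∘ h⟦2⟧ ∘ h (with h^0 = 𝟙_E). Assume: Hom(E, E⟦i⟧) = 0 unless i is even with 0 ≤ i ≤ 2n, and for each 0 ≤ j ≤ n the ℂ-vector space Hom(E, E⟦2j⟧) is one-dimensional spanned by h^j (in particular h^j ≠ 0). Let E⟦1⟧ → F → E ⟶h E⟦2⟧ be a distinguished triangle. Then dim_ℂ Hom(F, E) = 1, dim_ℂ Hom(F, E⟦2n+1⟧) = 1, and Hom(F, E⟦i⟧) = 0 for all integers i ∉ {0, 2n+1}. -/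
open CategoryTheory Pretriangulated

universe v u

/-- The `j`-fold composite `h^j = h⟦2(j-1)⟧' ∘ ⋯ ∘ h⟦2⟧' ∘ h : E ⟶ E⟦2j⟧` of a morphism
`h : E ⟶ E⟦2⟧` (with `h^0 = 𝟙 E`), formed using the composition of shifted morphisms. -/
noncomputable def shiftedPow {D : Type u} [Category.{v} D] [HasShift D ℤ]
    {E : D} (h : E ⟶ E⟦(2 : ℤ)⟧) : ∀ j : ℕ, E ⟶ E⟦((2 * j : ℕ) : ℤ)⟧
  | 0 => ShiftedHom.mk₀ ((2 * 0 : ℕ) : ℤ) (by norm_num) (𝟙 E)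
  | (j + 1) => ShiftedHom.comp (X := E) (Y := E) (Z := E) (a := ((2 * j : ℕ) : ℤ))
      (b := (2 : ℤ)) (shiftedPow h j) h (by push_cast; ring)

/-!
Write `Homⁱ(X, Y) = Hom(X, Y⟦i⟧)`. Applying `Hom(-, A)` to the triangle `E⟦1⟧ ⟶ F ⟶ E ⟶ʰ E⟦2⟧` and
identifying `Homⁱ(E⟦1⟧, A)` with `Homⁱ⁻¹(E, A)` gives the Gysin sequence
`Homⁱ⁻²(E, A) ⟶ Homⁱ(E, A) ⟶ Homⁱ(F, A) ⟶ Homⁱ⁻¹(E, A) ⟶ Homⁱ⁺¹(E, A)`,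
whose outer maps are composition with `h`. If `A = E` and `Hom*(E, E) = R[h]/(hⁿ⁺¹)`, multiplication
by `h` has kernel `R ⬝ hⁿ` and cokernel `R ⬝ 1`. These contribute `Hom²ⁿ⁺¹(F, E)` and `Hom⁰(F, E)`
respectively, and nothing else survives.
-/

open Function

section Exact

variable {R M₁ M₂ M₃ M₄ M₅ : Type*} [Ring R]
  [AddCommGroup M₁] [AddCommGroup M₂] [AddCommGroup M₃] [AddCommGroup M₄] [AddCommGroup M₅]
  [Module R M₁] [Module R M₂] [Module R M₃] [Module R M₄] [Module R M₅]
  {f : M₁ →ₗ[R] M₂} {g : M₂ →ₗ[R] M₃} {k : M₃ →ₗ[R] M₄} {l : M₄ →ₗ[R] M₅}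

theorem surjective_of_exact_of_exact_of_injective (hgk : Exact g k) (hkl : Exact k l)
    (hl : Injective l) : Surjective g := by
  have hk : k = 0 := LinearMap.ext fun x => hl (by simpa using hkl.apply_apply_eq_zero x)
  exact (LinearMap.exact_zero_iff_surjective M₄ g).1 (hk ▸ hgk)

theorem injective_of_exact_of_exact_of_surjective (hfg : Exact f g) (hgk : Exact g k)
    (hf : Surjective f) : Injective k := by
  have hg : g = 0 := LinearMap.ext (hf.forall.2 hfg.apply_apply_eq_zero)
  exact (LinearMap.exact_zero_iff_injective M₂ k).1 (hg ▸ hgk)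

theorem bijective_of_exact_of_subsingleton_of_injective [Subsingleton M₁] (hfg : Exact f g)
    (hgk : Exact g k) (hkl : Exact k l) (hl : Injective l) : Bijective g :=
  ⟨(LinearMap.exact_zero_iff_injective M₁ g).1 (Subsingleton.elim f 0 ▸ hfg),
    surjective_of_exact_of_exact_of_injective hgk hkl hl⟩

theorem bijective_of_exact_of_surjective_of_subsingleton [Subsingleton M₅] (hfg : Exact f g)
    (hgk : Exact g k) (hkl : Exact k l) (hf : Surjective f) : Bijective k :=
  ⟨injective_of_exact_of_exact_of_surjective hfg hgk hf,
    (LinearMap.exact_zero_iff_surjective M₅ k).1 (Subsingleton.elim l 0 ▸ hkl)⟩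

theorem subsingleton_of_exact_of_surjective_of_injective (hfg : Exact f g) (hgk : Exact g k)
    (hkl : Exact k l) (hf : Surjective f) (hl : Injective l) : Subsingleton M₃ := by
  have hg : Surjective g := surjective_of_exact_of_exact_of_injective hgk hkl hl
  have hk : Injective k := injective_of_exact_of_exact_of_surjective hfg hgk hf
  refine subsingleton_of_forall_eq 0 (hg.forall.2 fun x => hk ?_)
  rw [hgk.apply_apply_eq_zero, map_zero]

end Exact

section ShiftedPrecomp

variable (R : Type*) [Ring R] {D : Type u} [Category.{v} D] [HasShift D ℤ] [Preadditive D]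
  [Linear R D] [∀ n : ℤ, (shiftFunctor D n).Additive] [∀ n : ℤ, (shiftFunctor D n).Linear R]

/-- Precomposition `Hom(Y, A⟦b⟧) ⟶ Hom(X, A⟦c⟧)` with a morphism `f : X ⟶ Y⟦a⟧` of degree `a`,
for `b + a = c`, as a linear map. -/
@[simps]
noncomputable def shiftedPrecomp {X Y : D} {a b c : ℤ} (f : ShiftedHom X Y a) (A : D)
    (hc : b + a = c) : ShiftedHom Y A b →ₗ[R] ShiftedHom X A c where
  toFun φ := f.comp φ hc
  map_add' φ ψ := ShiftedHom.comp_add f φ ψ hc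
  map_smul' r φ := ShiftedHom.comp_smul r f φ hc

/-- The linear isomorphism `Hom(Y, A⟦a⟧) ≃ Hom(Y⟦p⟧, A⟦c⟧)` for `a + p = c`, given by the shift
functor. It is encoded as composition with `𝟙 (Y⟦p⟧)`, seen as a morphism from `Y⟦p⟧` to `Y` of
degree `p`, so that its compatibility with products is the associativity of composition. -/
noncomputable def shiftSourceEquiv {p a c : ℤ} (Y A : D) (hc : a + p = c) :
    ShiftedHom Y A a ≃ₗ[R] ShiftedHom (Y⟦p⟧) A c :=
  LinearEquiv.ofBijective (shiftedPrecomp R (𝟙 (Y⟦p⟧) : ShiftedHom (Y⟦p⟧) Y p) A hc) <| by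
    have hcomp : ⇑(shiftedPrecomp R (𝟙 (Y⟦p⟧) : ShiftedHom (Y⟦p⟧) Y p) A hc) =
        ((shiftFunctorAdd' D a p c hc).symm.app A).homToEquiv ∘ (shiftFunctor D p).map := by
      ext φ
      simp [ShiftedHom.comp]
    rw [hcomp]
    exact (Equiv.bijective _).comp ⟨Functor.map_injective _, Functor.map_surjective _⟩

theorem shiftedPrecomp_comp_shiftSourceEquiv {X Y : D} {p d : ℤ} (f : ShiftedHom X Y d)
    (hd : p + 1 = d) (A : D) {a b c : ℤ} (hb : a + p = b) (hc : b + 1 = c) (hac : a + d = c) :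
    shiftedPrecomp R
        (f ≫ (shiftFunctorAdd' D p 1 d hd).hom.app Y : ShiftedHom X (Y⟦p⟧) (1 : ℤ)) A hc ∘ₗ
      (shiftSourceEquiv R Y A hb).toLinearMap = shiftedPrecomp R f A hac := by
  ext φ
  let w : ShiftedHom X (Y⟦p⟧) (1 : ℤ) := f ≫ (shiftFunctorAdd' D p 1 d hd).hom.app Y
  let ι : ShiftedHom (Y⟦p⟧) Y p := 𝟙 (Y⟦p⟧)
  have hw : w.comp ι hd = f := by simp [w, ι, ShiftedHom.comp]
  calc w.comp (ι.comp φ hb) hc = (w.comp ι hd).comp φ hac :=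
        (ShiftedHom.comp_assoc w ι φ hd hb (by lia)).symm
    _ = f.comp φ hac := by rw [hw]

end ShiftedPrecomp

section LongExactSequence

variable (R : Type*) [Ring R] {D : Type u} [Category.{v} D] [Limits.HasZeroObject D]
  [HasShift D ℤ] [Preadditive D] [Linear R D] [∀ n : ℤ, (shiftFunctor D n).Additive]
  [Pretriangulated D]

theorem exact_leftComp_mor₂_mor₁ {T : Triangle D} (hT : T ∈ distTriang D) (A : D) :
    Exact (Linear.leftComp R A T.mor₂) (Linear.leftComp R A T.mor₁) := by
  refine fun φ => ⟨fun hφ => ?_, ?_⟩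
  · obtain ⟨ψ, rfl⟩ := T.yoneda_exact₂ hT φ hφ
    exact ⟨ψ, rfl⟩
  · rintro ⟨ψ, rfl⟩
    simp [comp_distTriang_mor_zero₁₂_assoc T hT]

variable [∀ n : ℤ, (shiftFunctor D n).Linear R]

theorem exact_shiftedPrecomp_mor₃_leftComp_mor₂ {T : Triangle D} (hT : T ∈ distTriang D) (A : D)
    {a b : ℤ} (hb : a + 1 = b) :
    Exact (shiftedPrecomp R (T.mor₃ : ShiftedHom _ _ (1 : ℤ)) A hb)
      (Linear.leftComp R (A⟦b⟧) T.mor₂) := by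
  refine fun φ => ⟨fun hφ => ?_, ?_⟩
  · obtain ⟨ψ, rfl⟩ := T.yoneda_exact₃ hT φ hφ
    obtain ⟨χ, rfl⟩ := (shiftSourceEquiv R T.obj₁ A hb).surjective ψ
    exact ⟨χ, by simp [shiftSourceEquiv, ShiftedHom.comp]⟩
  · rintro ⟨ψ, rfl⟩
    simp [ShiftedHom.comp, comp_distTriang_mor_zero₂₃_assoc T hT]

theorem exact_leftComp_mor₁_shiftedPrecomp_mor₃ {T : Triangle D} (hT : T ∈ distTriang D) (A : D)
    {a b : ℤ} (hb : a + 1 = b) :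
    Exact (Linear.leftComp R (A⟦a⟧) T.mor₁)
      (shiftedPrecomp R (T.mor₃ : ShiftedHom _ _ (1 : ℤ)) A hb) := by
  refine fun φ => ⟨fun hφ => ?_, ?_⟩
  · have hφ' : T.mor₃ ≫ φ⟦(1 : ℤ)⟧' = 0 := by
      rw [← cancel_mono ((shiftFunctorAdd' D a 1 b hb).inv.app A)]
      simpa [ShiftedHom.comp] using hφ
    obtain ⟨(ψ : T.obj₂⟦(1 : ℤ)⟧ ⟶ A⟦a⟧⟦(1 : ℤ)⟧), hψ⟩ :=
      Triangle.yoneda_exact₃ _ (rot_of_distTriang T hT) (φ⟦(1 : ℤ)⟧') hφ'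
    obtain ⟨χ, rfl⟩ := (shiftFunctor D (1 : ℤ)).map_surjective ψ
    replace hψ : φ⟦(1 : ℤ)⟧' = (-T.mor₁⟦(1 : ℤ)⟧') ≫ χ⟦(1 : ℤ)⟧' := hψ
    exact ⟨-χ, (shiftFunctor D (1 : ℤ)).map_injective (by simp [hψ])⟩
  · rintro ⟨ψ, rfl⟩
    simp [ShiftedHom.comp, comp_distTriang_mor_zero₃₁_assoc T hT]

end LongExactSequence

section Gysin

variable (R : Type*) [Ring R] {D : Type u} [Category.{v} D] [Limits.HasZeroObject D]
  [HasShift D ℤ] [Preadditive D] [Linear R D] [∀ n : ℤ, (shiftFunctor D n).Additive]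
  [∀ n : ℤ, (shiftFunctor D n).Linear R] [Pretriangulated D]

/-- The residue map `Hom(F, A⟦b⟧) ⟶ Hom(Y, A⟦a⟧)`, for `a + p = b`, of the Gysin sequence of a
triangle `Y⟦p⟧ ⟶ F ⟶ X ⟶ Y⟦p + 1⟧` with first morphism `α`. -/
noncomputable def gysinResidue {Y F : D} {p : ℤ} (α : Y⟦p⟧ ⟶ F) (A : D) {a b : ℤ}
    (hb : a + p = b) : ShiftedHom F A b →ₗ[R] ShiftedHom Y A a :=
  (shiftSourceEquiv R Y A hb).symm.toLinearMap ∘ₗ Linear.leftComp R (A⟦b⟧) α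

variable {X Y F : D} {p d : ℤ} {hd : p + 1 = d} {f : X ⟶ Y⟦d⟧} {α : Y⟦p⟧ ⟶ F} {β : F ⟶ X}
  (hT : Triangle.mk α β (f ≫ (shiftFunctorAdd' D p 1 d hd).hom.app Y) ∈ distTriang D) (A : D)

include hT

theorem gysin_exact₁ {a b : ℤ} (hb : a + d = b) :
    Exact (shiftedPrecomp R f A hb) (Linear.leftComp R (A⟦b⟧) β) := by
  have hb' : a + p + 1 = b := by lia
  rw [← shiftedPrecomp_comp_shiftSourceEquiv R f hd A rfl hb' hb]
  exact LinearEquiv.precomp_exact_iff_exact.2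
    (exact_shiftedPrecomp_mor₃_leftComp_mor₂ R hT A hb')

theorem gysin_exact₂ {a b : ℤ} (hb : a + p = b) :
    Exact (Linear.leftComp R (A⟦b⟧) β) (gysinResidue R α A hb) :=
  LinearEquiv.postcomp_exact_iff_exact.2 (exact_leftComp_mor₂_mor₁ R hT (A⟦b⟧))

theorem gysin_exact₃ {a b c : ℤ} (hb : a + p = b) (hc : a + d = c) :
    Exact (gysinResidue R α A hb) (shiftedPrecomp R f A hc) := by
  have hc' : b + 1 = c := by lia
  rw [← shiftedPrecomp_comp_shiftSourceEquiv R f hd A hb hc' hc]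
  exact (LinearEquiv.conj_symm_exact_iff_exact _ _ _).2
    (exact_leftComp_mor₁_shiftedPrecomp_mor₃ R hT A hc')

end Gysin

theorem comp_shiftedPow {D : Type u} [Category.{v} D] [HasShift D ℤ] {E : D}
    (h : E ⟶ E⟦(2 : ℤ)⟧) (j : ℕ) :
    ShiftedHom.comp (X := E) (Y := E) (Z := E) (c := ((2 * (j + 1) : ℕ) : ℤ)) h (shiftedPow h j)
      (by push_cast; ring) = shiftedPow h (j + 1) := by
  induction j with
  | zero => simp only [shiftedPow, ShiftedHom.mk₀_id_comp, ShiftedHom.comp_mk₀_id]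
  | succ j ih =>
    rw [shiftedPow, ← ShiftedHom.comp_assoc (a₁₂ := ((2 * (j + 1) : ℕ) : ℤ)), ih, ← shiftedPow]
    all_goals push_cast; ring

/-- The graded ring `Hom*(E, E)` is `R[h]/(hⁿ⁺¹)`, the cohomology ring of `ℙⁿ`, with `h` in degree
`2`. For `R = ℂ` this is the condition on `Hom*(E, E)` in the definition of a `ℙⁿ`-object. -/
structure IsProjectiveSpaceLike (R : Type*) [Ring R] {D : Type u} [Category.{v} D] [HasShift D ℤ]
    [Preadditive D] [Linear R D] (n : ℕ) {E : D} (h : E ⟶ E⟦(2 : ℤ)⟧) : Prop where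
  subsingleton : ∀ i : ℤ, (¬ ∃ j : ℕ, j ≤ n ∧ i = 2 * j) → Subsingleton (E ⟶ E⟦i⟧)
  bijective_toSpanSingleton : ∀ j : ℕ, j ≤ n →
    Bijective (LinearMap.toSpanSingleton R (E ⟶ E⟦((2 * j : ℕ) : ℤ)⟧) (shiftedPow h j))

namespace IsProjectiveSpaceLike

variable {R : Type*} [Ring R] {D : Type u} [Category.{v} D] [HasShift D ℤ]
  [Preadditive D] [Linear R D] {n : ℕ} {E : D} {h : E ⟶ E⟦(2 : ℤ)⟧}

theorem nonempty_linearEquiv (hE : IsProjectiveSpaceLike R n h) {j : ℕ} (hj : j ≤ n) {i : ℤ}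
    (hi : i = 2 * j) : Nonempty (R ≃ₗ[R] (E ⟶ E⟦i⟧)) := by
  obtain rfl : i = ((2 * j : ℕ) : ℤ) := mod_cast hi
  exact ⟨LinearEquiv.ofBijective _ (hE.bijective_toSpanSingleton j hj)⟩

variable [∀ n : ℤ, (shiftFunctor D n).Additive] [∀ n : ℤ, (shiftFunctor D n).Linear R]

theorem bijective_shiftedPrecomp (hE : IsProjectiveSpaceLike R n h) {j : ℕ} (hj : j < n)
    {a b : ℤ} (ha : a = 2 * j) (hb : a + 2 = b) : Bijective (shiftedPrecomp R h E hb) := by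
  obtain rfl : a = ((2 * j : ℕ) : ℤ) := mod_cast ha
  obtain rfl : b = ((2 * (j + 1) : ℕ) : ℤ) := by rw [← hb]; push_cast; ring
  rw [← Bijective.of_comp_iff _ (hE.bijective_toSpanSingleton j hj.le), ← LinearMap.coe_comp,
    LinearMap.comp_toSpanSingleton, shiftedPrecomp_apply, comp_shiftedPow]
  exact hE.bijective_toSpanSingleton (j + 1) hj

theorem injective_shiftedPrecomp (hE : IsProjectiveSpaceLike R n h) {a b : ℤ} (ha : a ≠ 2 * n)
    (hb : a + 2 = b) : Injective (shiftedPrecomp R h E hb) := by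
  by_cases hj : ∃ j : ℕ, j ≤ n ∧ a = 2 * j
  · obtain ⟨j, hjn, haj⟩ := hj
    exact (hE.bijective_shiftedPrecomp (by lia) haj hb).1
  · have := hE.subsingleton a hj
    exact injective_of_subsingleton _

theorem surjective_shiftedPrecomp (hE : IsProjectiveSpaceLike R n h) {a b : ℤ} (hb₀ : b ≠ 0)
    (hb : a + 2 = b) : Surjective (shiftedPrecomp R h E hb) := by
  by_cases hj : ∃ j : ℕ, j ≤ n ∧ b = 2 * j
  · obtain ⟨_ | j, hjn, hbj⟩ := hj
    · simp [hbj] at hb₀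
    · exact (hE.bijective_shiftedPrecomp (j := j) hjn (by lia) hb).2
  · have := hE.subsingleton b hj
    exact surjective_to_subsingleton _

end IsProjectiveSpaceLike

theorem stmt_6_general {R : Type*} [Ring R] {D : Type u} [Category.{v} D]
    [Limits.HasZeroObject D] [HasShift D ℤ] [Preadditive D] [Linear R D]
    [∀ n : ℤ, (shiftFunctor D n).Additive] [∀ n : ℤ, (shiftFunctor D n).Linear R]
    [Pretriangulated D] {n : ℕ} {E : D} {h : E ⟶ E⟦(2 : ℤ)⟧}
    (hE : IsProjectiveSpaceLike R n h) {F : D} {α : E⟦(1 : ℤ)⟧ ⟶ F} {β : F ⟶ E}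
    (hT : Triangle.mk α β (h ≫ (shiftFunctorAdd' D 1 1 2 (by norm_num)).hom.app E)
      ∈ distTriang D) :
    Nonempty (R ≃ₗ[R] (F ⟶ E)) ∧ Nonempty (R ≃ₗ[R] (F ⟶ E⟦(2 * n + 1 : ℤ)⟧)) ∧
      ∀ i : ℤ, i ≠ 0 → i ≠ 2 * n + 1 → Subsingleton (F ⟶ E⟦i⟧) := by
  refine ⟨?_, ?_, fun i hi₀ hi₁ => ?_⟩
  · obtain ⟨e⟩ := hE.nonempty_linearEquiv n.zero_le (i := 0) rfl
    have := hE.subsingleton (-2) (by lia)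
    have hβ : Bijective (Linear.leftComp R (E⟦(0 : ℤ)⟧) β) :=
      bijective_of_exact_of_subsingleton_of_injective
        (gysin_exact₁ R hT E (a := -2) (b := 0) (by lia))
        (gysin_exact₂ R hT E (a := -1) (b := 0) (by lia)) (gysin_exact₃ R hT E (c := 1) _ (by lia))
        (hE.injective_shiftedPrecomp (by lia) _)
    exact ⟨e ≪≫ₗ .ofBijective _ hβ ≪≫ₗ
      Linear.homCongr R (.refl F) ((shiftFunctorZero D ℤ).app E)⟩
  · obtain ⟨e⟩ := hE.nonempty_linearEquiv le_rfl rfl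
    have := hE.subsingleton (2 * n + 2) (by lia)
    have hres : Bijective (gysinResidue R α E (a := 2 * n) rfl) :=
      bijective_of_exact_of_surjective_of_subsingleton
        (gysin_exact₁ R hT E (a := 2 * n - 1) (by lia)) (gysin_exact₂ R hT E rfl)
        (gysin_exact₃ R hT E rfl rfl) (hE.surjective_shiftedPrecomp (by lia) _)
    exact ⟨e ≪≫ₗ (LinearEquiv.ofBijective _ hres).symm⟩
  · exact subsingleton_of_exact_of_surjective_of_injective
      (gysin_exact₁ R hT E (a := i - 2) (by lia)) (gysin_exact₂ R hT E (a := i - 1) (by lia))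
      (gysin_exact₃ R hT E _ rfl) (hE.surjective_shiftedPrecomp hi₀ _)
      (hE.injective_shiftedPrecomp (by lia) _)

/-- Let `D` be a `ℂ`-linear pretriangulated category, `n ≥ 1`, and
`E` an object with a morphism `h : E ⟶ E⟦2⟧` such that `Hom(E, E⟦i⟧)` vanishes unless
`i = 2j` with `0 ≤ j ≤ n`, in which case it is one-dimensional spanned by `h^j`
(so that `⊕ᵢ Hom(E, E⟦i⟧) ≅ H^*(ℙⁿ, ℂ)`, i.e. `E` is a `ℙⁿ`-object). If
`E⟦1⟧ ⟶ F ⟶ E ⟶ʰ E⟦2⟧` is a distinguished triangle, then `Hom(F, E)` and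
`Hom(F, E⟦2n+1⟧)` are one-dimensional, and `Hom(F, E⟦i⟧) = 0` for `i ∉ {0, 2n+1}`. -/
theorem stmt_6 {D : Type u} [Category.{v} D] [Limits.HasZeroObject D] [HasShift D ℤ]
    [Preadditive D] [Linear ℂ D] [∀ n : ℤ, (shiftFunctor D n).Additive]
    [∀ n : ℤ, (shiftFunctor D n).Linear ℂ] [Pretriangulated D]
    (n : ℕ) (hn : 1 ≤ n) (E : D) (h : E ⟶ E⟦(2 : ℤ)⟧)
    (hvanish : ∀ i : ℤ, (¬ ∃ j : ℕ, j ≤ n ∧ i = 2 * j) → ∀ φ : E ⟶ E⟦i⟧, φ = 0)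
    (hpow_ne : ∀ j : ℕ, j ≤ n → shiftedPow h j ≠ 0)
    (hspan : ∀ (j : ℕ), j ≤ n → ∀ φ : E ⟶ E⟦((2 * j : ℕ) : ℤ)⟧,
      ∃ c : ℂ, φ = c • shiftedPow h j)
    (F : D) (α : E⟦(1 : ℤ)⟧ ⟶ F) (β : F ⟶ E)
    (hT : Triangle.mk α β (h ≫ (shiftFunctorAdd' D 1 1 2 (by norm_num)).hom.app E)
      ∈ distTriang D) :
    Module.finrank ℂ (F ⟶ E) = 1 ∧
    Module.finrank ℂ (F ⟶ E⟦(2 * n + 1 : ℤ)⟧) = 1 ∧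
    (∀ i : ℤ, i ≠ 0 → i ≠ 2 * n + 1 → ∀ φ : F ⟶ E⟦i⟧, φ = 0) := by
  have hE : IsProjectiveSpaceLike ℂ n h :=
    { subsingleton := fun i hi => subsingleton_of_forall_eq 0 (hvanish i hi)
      bijective_toSpanSingleton := fun j hj =>
        ⟨LinearMap.ker_eq_bot.1 (LinearMap.ker_toSpanSingleton ℂ (hpow_ne j hj)),
          fun φ => (hspan j hj φ).imp fun _ hc => hc.symm⟩ }
  obtain ⟨⟨e₀⟩, ⟨e₁⟩, hF⟩ := stmt_6_general hE hT
  exact ⟨e₀.finrank_eq ▸ Module.finrank_self ℂ, e₁.finrank_eq ▸ Module.finrank_self ℂ,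
    fun i hi₀ hi₁ φ => (hF i hi₀ hi₁).elim φ 0⟩
end

section
/- Let D be a ℂ-linear pretriangulated category with shift functors ⟦n⟧, and let X be an object with dim_ℂ Hom(X, X⟦1⟧) = 1 and dim_ℂ Hom(X, X⟦2⟧) = 1. Let A ⟶a B ⟶b X ⟶e' A⟦1⟧ be a distinguished triangle. Define ξ : Hom(A, X) → Hom(X, X⟦1⟧) by ξ(φ) = φ⟦1⟧ ∘ e' and η : Hom(A, X⟦1⟧) → Hom(X, X⟦2⟧) by η(ψ) = ψ⟦1⟧ ∘ e'. Assume ξ is surjective, dim_ℂ Hom(A, X⟦1⟧) = 1 with spanning element e, and η(e) ≠ 0. Then Hom(B, X⟦1⟧) = 0. -/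
open CategoryTheory Pretriangulated

universe v u

/-!
Apply `Hom(-, Y)` to `A ⟶ B ⟶ X ⟶ A⟦1⟧`. In the long exact sequence
`Hom(A⟦1⟧, Y) ⟶ Hom(X, Y) ⟶ Hom(B, Y) ⟶ Hom(A, Y) ⟶ Hom(X⟦-1⟧, Y)`, the group `Hom(B, Y)` vanishes
as soon as the first map is surjective and the last one, which is `ψ ↦ e' ≫ ψ⟦1⟧'` up to shift, is
injective. The last map is linear and nonzero at the class `e`; when `Hom(A, Y)` is one-dimensional,
Schur's lemma makes it injective.
-/

section Linear

variable (k : Type*) [Ring k] {C D : Type*} [Category* C] [Category* D] [Preadditive C]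
  [Preadditive D] [Linear k C] [Linear k D]

theorem comp_map_injective_of_isSimpleModule (F : C ⥤ D) [F.Additive] [F.Linear k] {A Y : C}
    [IsSimpleModule k (A ⟶ Y)] {X : D} (h : X ⟶ F.obj A) {e : A ⟶ Y} (he : h ≫ F.map e ≠ 0) :
    Function.Injective (fun ψ : A ⟶ Y => h ≫ F.map ψ) := by
  let η : (A ⟶ Y) →ₗ[k] (X ⟶ F.obj Y) := Linear.leftComp k (F.obj Y) h ∘ₗ F.mapLinearMap k
  have hη : η ≠ 0 := fun h₀ => he (LinearMap.congr_fun h₀ e)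
  exact LinearMap.injective_of_ne_zero hη

end Linear

section Triangulated

variable {D : Type*} [Category* D] [Limits.HasZeroObject D] [HasShift D ℤ] [Preadditive D]
  [∀ n : ℤ, (shiftFunctor D n).Additive] [Pretriangulated D] {T : Triangle D} {Y : D}

theorem mor₁_comp_eq_zero_of_injective (hT : T ∈ distTriang D)
    (hinj : Function.Injective (fun ψ : T.obj₁ ⟶ Y => T.mor₃ ≫ ψ⟦(1 : ℤ)⟧'))
    (φ : T.obj₂ ⟶ Y) : T.mor₁ ≫ φ = 0 := by
  apply hinj
  simp only [Functor.map_comp, Functor.map_zero, Limits.comp_zero,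
    comp_distTriang_mor_zero₃₁_assoc T hT, Limits.zero_comp]

theorem mor₂_comp_eq_zero_of_surjective (hT : T ∈ distTriang D)
    (hsurj : Function.Surjective (fun f : T.obj₁⟦(1 : ℤ)⟧ ⟶ Y => T.mor₃ ≫ f))
    (g : T.obj₃ ⟶ Y) : T.mor₂ ≫ g = 0 := by
  obtain ⟨f, rfl⟩ := hsurj g
  rw [comp_distTriang_mor_zero₂₃_assoc T hT, Limits.zero_comp]

theorem hom_obj₂_eq_zero_of_surjective_of_injective (hT : T ∈ distTriang D)
    (hsurj : Function.Surjective (fun f : T.obj₁⟦(1 : ℤ)⟧ ⟶ Y => T.mor₃ ≫ f))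
    (hinj : Function.Injective (fun ψ : T.obj₁ ⟶ Y => T.mor₃ ≫ ψ⟦(1 : ℤ)⟧'))
    (φ : T.obj₂ ⟶ Y) : φ = 0 := by
  obtain ⟨g, rfl⟩ := T.yoneda_exact₂ hT φ (mor₁_comp_eq_zero_of_injective hT hinj φ)
  exact mor₂_comp_eq_zero_of_surjective hT hsurj g

theorem stmt_8_general (k : Type*) [Ring k] [Linear k D] [(shiftFunctor D (1 : ℤ)).Linear k]
    {X A B : D} {a : A ⟶ B} {b : B ⟶ X} {e' : X ⟶ A⟦(1 : ℤ)⟧}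
    (hT : Triangle.mk a b e' ∈ distTriang D) [IsSimpleModule k (A ⟶ Y)]
    (hξ : Function.Surjective (fun f : A⟦(1 : ℤ)⟧ ⟶ Y => e' ≫ f))
    {e : A ⟶ Y} (hη : e' ≫ e⟦(1 : ℤ)⟧' ≠ 0) (φ : B ⟶ Y) : φ = 0 :=
  hom_obj₂_eq_zero_of_surjective_of_injective hT hξ
    (comp_map_injective_of_isSimpleModule k (shiftFunctor D (1 : ℤ)) e' hη) φ

end Triangulated

/-- Let `D` be a `ℂ`-linear pretriangulated category and `X` an object
with `dim Hom(X, X⟦1⟧) = dim Hom(X, X⟦2⟧) = 1`. Let `A ⟶ B ⟶ X ⟶ᵉ' A⟦1⟧` be a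
distinguished triangle, and define `ξ : Hom(A,X) → Hom(X,X⟦1⟧)`, `φ ↦ φ⟦1⟧ ∘ e'`, and
`η : Hom(A,X⟦1⟧) → Hom(X,X⟦2⟧)`, `ψ ↦ ψ⟦1⟧ ∘ e'`. If `ξ` is surjective,
`Hom(A,X⟦1⟧)` is one-dimensional spanned by `e`, and `η e ≠ 0`, then
`Hom(B, X⟦1⟧) = 0`. -/
theorem stmt_8 {D : Type u} [Category.{v} D] [Limits.HasZeroObject D] [HasShift D ℤ]
    [Preadditive D] [Linear ℂ D] [∀ n : ℤ, (shiftFunctor D n).Additive]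
    [∀ n : ℤ, (shiftFunctor D n).Linear ℂ] [Pretriangulated D]
    (X : D)
    (hX1 : Module.finrank ℂ (X ⟶ X⟦(1 : ℤ)⟧) = 1)
    (hX2 : Module.finrank ℂ (X ⟶ X⟦(2 : ℤ)⟧) = 1)
    {A B : D} (a : A ⟶ B) (b : B ⟶ X) (e' : X ⟶ A⟦(1 : ℤ)⟧)
    (hT : Triangle.mk a b e' ∈ distTriang D)
    (hξ : Function.Surjective (fun φ : A ⟶ X => e' ≫ φ⟦(1 : ℤ)⟧'))
    (e : A ⟶ X⟦(1 : ℤ)⟧)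
    (hdim : Module.finrank ℂ (A ⟶ X⟦(1 : ℤ)⟧) = 1)
    (hspan : ∀ ψ : A ⟶ X⟦(1 : ℤ)⟧, ∃ c : ℂ, ψ = c • e)
    (hη : e' ≫ e⟦(1 : ℤ)⟧' ≫ (shiftFunctorAdd' D 1 1 2 (by norm_num)).inv.app X ≠ 0) :
    ∀ φ : B ⟶ X⟦(1 : ℤ)⟧, φ = 0 := by
  have := isSimpleModule_iff_finrank_eq_one.mpr hdim
  exact stmt_8_general ℂ hT (.of_comp (g := fun φ : A ⟶ X => φ⟦(1 : ℤ)⟧') hξ)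
    fun h => hη (by rw [reassoc_of% h, Limits.zero_comp])
end
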